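/- Let f : ℝⁿ → ℝ be continuous and positive-valued with epigraph L, and let K ⊆ ℝⁿ × ℝ be a nonempty closed set disjoint from L containing a point (x₀,y₀) with y₀ ≤ 0. For every x ∈ ℝⁿ and y ∈ ℝ: if y < G⁻(x) then d((x,y),K) < d((x,y),L), and if y > G⁺(x) then d((x,y),K) > d((x,y),L). -/

import Mathlib

open Metric Set

noncomputable section

/-- `ℝⁿ × ℝ` with the Euclidean (ℓ²) metric. -/
abbrev EucProd (n : ℕ) := WithLp 2 (EuclideanSpace ℝ (Fin n) × ℝ)

/-- The point of `ℝⁿ × ℝ` with first component `x` and last coordinate `y`. -/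
def pt {n : ℕ} (x : EuclideanSpace ℝ (Fin n)) (y : ℝ) : EucProd n :=
  (WithLp.equiv 2 (EuclideanSpace ℝ (Fin n) × ℝ)).symm (x, y)

/-- The epigraph of `f : ℝⁿ → ℝ`, viewed as a subset of `ℝⁿ × ℝ`. -/
def epigraph {n : ℕ} (f : EuclideanSpace ℝ (Fin n) → ℝ) : Set (EucProd n) :=
  {p | f ((WithLp.equiv 2 (EuclideanSpace ℝ (Fin n) × ℝ)) p).1 ≤
      ((WithLp.equiv 2 (EuclideanSpace ℝ (Fin n) × ℝ)) p).2}

/-- The upper equidistant function `G⁺` associated with the focal sets `K` and `L`: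
`G⁺(x) = sup {y | d((x,y),K) = d((x,y),L)}`. -/
def Gplus {n : ℕ} (K L : Set (EucProd n)) (x : EuclideanSpace ℝ (Fin n)) : ℝ :=
  sSup {y : ℝ | Metric.infDist (pt x y) K = Metric.infDist (pt x y) L}

/-- The lower equidistant function `G⁻` associated with the focal sets `K` and `L`:
`G⁻(x) = inf {y | d((x,y),K) = d((x,y),L)}`. -/
def Gminus {n : ℕ} (K L : Set (EucProd n)) (x : EuclideanSpace ℝ (Fin n)) : ℝ :=
  sInf {y : ℝ | Metric.infDist (pt x y) K = Metric.infDist (pt x y) L}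

theorem dist_pt_sq {n : ℕ} (x : EuclideanSpace ℝ (Fin n)) (y : ℝ) (q : EucProd n) :
    dist (pt x y) q ^ 2 = dist x q.fst ^ 2 + (y - q.snd) ^ 2 := by
  rw [WithLp.prod_dist_eq_of_L2, Real.sq_sqrt (by positivity)]
  simp only [Real.dist_eq, sq_abs]
  rfl

theorem continuous_pt {n : ℕ} (x : EuclideanSpace ℝ (Fin n)) :
    Continuous (fun y : ℝ => pt x y) := by
  have : Isometry (fun y : ℝ => pt x y) := by
    refine Isometry.of_dist_eq fun a b => ?_
    have h := dist_pt_sq x a (pt x b)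
    have h2 : dist (pt x a) (pt x b) ^ 2 = dist a b ^ 2 := by
      rw [h, Real.dist_eq, sq_abs]
      simp [pt]
    exact (sq_eq_sq₀ dist_nonneg dist_nonneg).1 h2
  exact this.continuous

theorem eventually_low {n : ℕ} (f : EuclideanSpace ℝ (Fin n) → ℝ) (hf : Continuous f)
    (hfpos : ∀ x, 0 < f x) (K : Set (EucProd n))
    (x₀ : EuclideanSpace ℝ (Fin n)) (y₀ : ℝ) (hx₀ : pt x₀ y₀ ∈ K) (hy₀ : y₀ ≤ 0)
    (x : EuclideanSpace ℝ (Fin n)) :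
    ∃ Y : ℝ, ∀ y ≤ Y, infDist (pt x y) K < infDist (pt x y) (epigraph f) := by
  set a := dist x x₀ with ha
  have ha0 : 0 ≤ a := dist_nonneg
  obtain ⟨z, -, hz⟩ := (isCompact_closedBall x (a + 1)).exists_isMinOn
    ⟨x, mem_closedBall_self (by positivity)⟩ hf.continuousOn
  set m := f z with hm
  have hm0 : 0 < m := hfpos z
  refine ⟨min y₀ (-(a ^ 2 / (2 * m))), fun y hy => ?_⟩
  have hy1 : y ≤ y₀ := hy.trans (min_le_left _ _)
  have hy2 : a ^ 2 ≤ 2 * m * (-y) := by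
    have h : a ^ 2 / (2 * m) ≤ -y := by
      have := hy.trans (min_le_right _ _)
      linarith
    rw [div_le_iff₀ (by positivity)] at h
    linarith
  have hne : (epigraph f).Nonempty := ⟨pt x (f x), by simp [epigraph, pt]⟩
  set e := min 1 (m ^ 2) with he
  have he0 : 0 < e := lt_min one_pos (by positivity)
  have hK : infDist (pt x y) K ≤ √(a ^ 2 + y ^ 2) := by
    refine (infDist_le_dist_of_mem hx₀).trans (Real.le_sqrt_of_sq_le ?_)
    rw [dist_pt_sq]
    change a ^ 2 + (y - y₀) ^ 2 ≤ _
    nlinarith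
  have hLd : √(a ^ 2 + y ^ 2 + e) ≤ infDist (pt x y) (epigraph f) := by
    refine (le_infDist hne).2 fun {q} hq => ?_
    refine Real.sqrt_le_iff.2 ⟨dist_nonneg, ?_⟩
    rw [dist_pt_sq]
    have hq' : f q.fst ≤ q.snd := hq
    have hqp := hfpos q.fst
    by_cases hin : q.fst ∈ closedBall x (a + 1)
    · have hmq : m ≤ f q.fst := hz hin
      have := min_le_right 1 (m ^ 2)
      have h3 : (m - y) ^ 2 ≤ (q.snd - y) ^ 2 :=
        pow_le_pow_left₀ (by linarith) (by linarith) 2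
      nlinarith [sq_nonneg (dist x q.fst)]
    · rw [mem_closedBall, dist_comm, not_le] at hin
      have := min_le_left 1 (m ^ 2)
      have h3 : (a + 1) ^ 2 ≤ dist x q.fst ^ 2 := pow_le_pow_left₀ (by linarith) hin.le 2
      have h4 : (-y) ^ 2 ≤ (q.snd - y) ^ 2 :=
        pow_le_pow_left₀ (by linarith) (by linarith) 2
      nlinarith
  refine hK.trans_lt (lt_of_lt_of_le ?_ hLd)
  exact Real.sqrt_lt_sqrt (by positivity) (by linarith)

theorem stmt2 {n : ℕ} (f : EuclideanSpace ℝ (Fin n) → ℝ) (hf : Continuous f)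
    (hfpos : ∀ x, 0 < f x)
    (L : Set (EucProd n)) (hL : L = epigraph f)
    (K : Set (EucProd n)) (hKcl : IsClosed K) (hKne : K.Nonempty)
    (hdisj : K ∩ L = ∅)
    (x₀ : EuclideanSpace ℝ (Fin n)) (y₀ : ℝ) (hx₀ : pt x₀ y₀ ∈ K) (hy₀ : y₀ ≤ 0)
    (x : EuclideanSpace ℝ (Fin n)) (y : ℝ) :
    (y < Gminus K L x → Metric.infDist (pt x y) K < Metric.infDist (pt x y) L) ∧
      (Gplus K L x < y → Metric.infDist (pt x y) L < Metric.infDist (pt x y) K) := by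
  subst hL
  obtain ⟨Y, hY⟩ := eventually_low f hf hfpos K x₀ y₀ hx₀ hy₀ x
  have hup : ∀ t, f x ≤ t → infDist (pt x t) (epigraph f) < infDist (pt x t) K := by
    intro t ht
    have hmem : pt x t ∈ epigraph f := ht
    rw [infDist_zero_of_mem hmem]
    refine (hKcl.notMem_iff_infDist_pos hKne).1 fun h => ?_
    have : pt x t ∈ K ∩ epigraph f := ⟨h, hmem⟩
    rw [hdisj] at this
    exact this
  have hc1 : Continuous fun t => infDist (pt x t) K :=
    (continuous_infDist_pt K).comp (continuous_pt x)
  have hc2 : Continuous fun t => infDist (pt x t) (epigraph f) :=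
    (continuous_infDist_pt _).comp (continuous_pt x)
  have key : ∀ s t : ℝ, s ≤ t → infDist (pt x s) K ≤ infDist (pt x s) (epigraph f) →
      infDist (pt x t) (epigraph f) ≤ infDist (pt x t) K →
      ∃ c ∈ Icc s t, infDist (pt x c) K = infDist (pt x c) (epigraph f) := by
    intro s t hst h1 h2
    obtain ⟨c, hc, h⟩ := intermediate_value_Icc hst (hc1.sub hc2).continuousOn
      (show (0 : ℝ) ∈ Icc _ _ from ⟨sub_nonpos.2 h1, sub_nonneg.2 h2⟩)
    exact ⟨c, hc, sub_eq_zero.1 h⟩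
  have hbb : BddBelow {t : ℝ | infDist (pt x t) K = infDist (pt x t) (epigraph f)} :=
    ⟨Y, fun t ht => le_of_not_ge fun h => (hY t h).ne ht⟩
  have hba : BddAbove {t : ℝ | infDist (pt x t) K = infDist (pt x t) (epigraph f)} :=
    ⟨f x, fun t ht => le_of_not_ge fun h => (hup t h).ne' ht⟩
  constructor
  · intro hy
    by_contra! h
    obtain ⟨c, hc, hceq⟩ := key (min y Y) y (min_le_left _ _) (hY _ (min_le_right _ _)).le h
    exact absurd (hy.trans_le (csInf_le hbb hceq)) (not_lt.2 hc.2)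
  · intro hy
    by_contra! h
    obtain ⟨c, hc, hceq⟩ := key y (max y (f x)) (le_max_left _ _) h (hup _ (le_max_right _ _)).le
    exact absurd ((le_csSup hba hceq).trans_lt hy) (not_lt.2 hc.1)

end
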